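/- arXiv:q-alg/9605021 — 2 statements merged into one kernel-verified Lean document; each statement's English description precedes it below -/
import Mathlib

section
/- Let B ⊆ U_n be the unital ℚ-subalgebra generated by the bosonic elements σ_{ab} := σ_a σ_b + σ_b σ_a (1 ≤ a, b ≤ 2n). Then the ℚ-linear map B ⊗_ℚ Ω → U_n induced by multiplication, b ⊗ ω ↦ b·ω, is a linear isomorphism of ℚ-vector spaces. (This expresses the decomposition U(osp(1|2n)) = U(sp(2n)) ⊗ Ω.) -/
open scoped BigOperators TensorProduct
open Nat

noncomputable section

/-- The symplectic metric `g` of `osp(1|2n)` (0-indexed). -/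
def gmat (n : ℕ) (a b : Fin (2*n)) : ℚ :=
  if (a:ℕ) < n ∧ (b:ℕ) = (a:ℕ) + n then -1
  else if (b:ℕ) < n ∧ (a:ℕ) = (b:ℕ) + n then 1
  else 0

/-- The defining relations of `U(osp(1|2n))`:
`(σₐσ_b + σ_bσₐ)σ_c - σ_c(σₐσ_b + σ_bσₐ) = -g_{ac} σ_b - g_{bc} σₐ`. -/
inductive OspRel (n : ℕ) : FreeAlgebra ℚ (Fin (2*n)) → FreeAlgebra ℚ (Fin (2*n)) → Prop
  | rel (a b c : Fin (2*n)) : OspRel n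
      ((FreeAlgebra.ι ℚ a * FreeAlgebra.ι ℚ b + FreeAlgebra.ι ℚ b * FreeAlgebra.ι ℚ a)
          * FreeAlgebra.ι ℚ c)
      (FreeAlgebra.ι ℚ c *
          (FreeAlgebra.ι ℚ a * FreeAlgebra.ι ℚ b + FreeAlgebra.ι ℚ b * FreeAlgebra.ι ℚ a)
        - algebraMap ℚ (FreeAlgebra ℚ (Fin (2*n))) (gmat n a c) * FreeAlgebra.ι ℚ b
        - algebraMap ℚ (FreeAlgebra ℚ (Fin (2*n))) (gmat n b c) * FreeAlgebra.ι ℚ a)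

/-- The universal enveloping superalgebra `U(osp(1|2n))`. -/
abbrev U (n : ℕ) := RingQuot (OspRel n)

/-- The fermionic generators `σₐ`. -/
def σ (n : ℕ) (a : Fin (2*n)) : U n :=
  RingQuot.mkAlgHom ℚ (OspRel n) (FreeAlgebra.ι ℚ a)

/-- The bosonic generators `σ_{ab} = σₐσ_b + σ_bσₐ`. -/
def σσ (n : ℕ) (a b : Fin (2*n)) : U n := σ n a * σ n b + σ n b * σ n a

/-- The antisymmetrized monomial `[a₁ … a_p]`. -/
def brkt (n : ℕ) (p : ℕ) (a : Fin p → Fin (2*n)) : U n :=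
  ∑ s : Equiv.Perm (Fin p),
    (Equiv.Perm.sign s : ℤ) • (List.ofFn fun i => σ n (a (s i))).prod

/-- `Ω`, the span of all the antisymmetrized monomials. -/
def Omega (n : ℕ) : Submodule ℚ (U n) :=
  Submodule.span ℚ {x | ∃ p, ∃ a : Fin p → Fin (2*n), x = brkt n p a}


/-- `B`, the unital subalgebra generated by the bosonic elements `σ_{ab}`. -/
def Bos (n : ℕ) : Subalgebra ℚ (U n) :=
  Algebra.adjoin ℚ {x | ∃ a b, x = σσ n a b}

/-- The multiplication map `B ⊗[ℚ] Ω → U n`, `b ⊗ ω ↦ b·ω`. -/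
def mulMap (n : ℕ) : (Bos n ⊗[ℚ] Omega n) →ₗ[ℚ] U n :=
  TensorProduct.lift
    (((LinearMap.mul ℚ (U n)).comp (Bos n).val.toLinearMap).compl₂ (Omega n).subtype)

/-! The coproduct of the enveloping superalgebra, followed by the `(1|2n)`-dimensional defining
representation, is an algebra map `Δ` from `A` to matrices over `A`. The row of the even basis
vector turns `Δ` into odd operators on `A`, one for each index, which commute with left
multiplication by bosonic elements and satisfy, up to shorter monomials, the contraction rule of
an exterior algebra. Applying `p` of them to `[a₁ … a_p]` gives `p!` times a determinant and
kills all shorter monomials. Hence the brackets over increasing index tuples are linearly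
independent over the bosonic subalgebra `B`, which is injectivity. For surjectivity, the
relations move bosonic elements to the left, so permuting the letters of a monomial of length
`p + 2` changes it, up to sign, by an element of `B` times monomials of length `p`; therefore
`[a₁ … a_p]` is `p!` times the monomial modulo shorter ones. -/

universe u v

lemma commute_anticommutator {A : Type*} [Ring A] {x y z : A} (hy : x * y = -(y * x))
    (hz : x * z = -(z * x)) : Commute x (y * z + z * y) := by
  have commute_mul {y z : A} (hy : x * y = -(y * x)) (hz : x * z = -(z * x)) :
      Commute x (y * z) := by
    rw [Commute, SemiconjBy, ← mul_assoc, hy, neg_mul, mul_assoc, hz, mul_neg, neg_neg, mul_assoc]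
  exact (commute_mul hy hz).add_right (commute_mul hz hy)

section Relations

variable {K A C ι κ : Type*} [CommRing K] [Ring A] [Algebra K A] [Ring C] [Algebra K C]

/-- The family `X` satisfies the defining relations of `U(osp)` for the form `g`, that is
`[{X a, X b}, X c] = -g a c X b - g b c X a`. -/
def IsOspFamily (g : ι → ι → K) (X : ι → A) : Prop :=
  ∀ a b c, (X a * X b + X b * X a) * X c =
    X c * (X a * X b + X b * X a) - g a c • X b - g b c • X a

namespace IsOspFamily

variable {g : ι → ι → K} {X Y : ι → A}

lemma map (hX : IsOspFamily g X) (f : A →ₐ[K] C) : IsOspFamily g fun a => f (X a) := by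
  intro a b c
  simpa only [map_add, map_sub, map_mul, map_smul] using congrArg f (hX a b c)

lemma pi {Z : ι → κ → A} (hZ : ∀ i, IsOspFamily g fun a => Z a i) : IsOspFamily g Z :=
  fun a b c => funext fun i => hZ i a b c

lemma neg (hX : IsOspFamily g X) : IsOspFamily g fun a => -X a := by
  intro a b c
  rw [neg_mul_neg, neg_mul_neg, mul_neg, hX a b c, neg_mul, smul_neg, smul_neg]
  abel

lemma add (hX : IsOspFamily g X) (hY : IsOspFamily g Y) (hXY : ∀ a b, X a * Y b = -(Y b * X a)) :
    IsOspFamily g fun a => X a + Y a := by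
  have anticommutator_add (a b : ι) : (X a + Y a) * (X b + Y b) + (X b + Y b) * (X a + Y a) =
      (X a * X b + X b * X a) + (Y a * Y b + Y b * Y a) := by
    simp only [add_mul, mul_add, hXY]
    abel
  have hYX (a b : ι) : Y a * X b = -(X b * Y a) := by rw [hXY, neg_neg]
  intro a b c
  rw [anticommutator_add, add_mul, mul_add _ (X c), mul_add _ (X c), hX, hY,
    (commute_anticommutator (hXY c a) (hXY c b)).symm.eq,
    (commute_anticommutator (hYX c a) (hYX c b)).symm.eq]
  simp only [add_mul, mul_add, smul_add]
  abel

end IsOspFamily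

variable [Fintype ι] [DecidableEq ι]

/-- The matrix of the odd generator `a` in the defining representation of `osp` on the superspace
`K^{1|ι}`; the even basis vector is `none`, the odd ones are `some c`. -/
def definingMatrix (g : ι → ι → K) (a : ι) : Matrix (Option ι) (Option ι) K :=
  fun
  | none, some c => if a = c then 1 else 0
  | some c, none => g a c
  | _, _ => 0

/-- The matrix `x ⊗ (-1)^F` with entries in `A`, where `F` is the parity on `K^{1|ι}`. -/
def gradedDiagonal (ι : Type*) [DecidableEq ι] (x : A) : Matrix (Option ι) (Option ι) A :=
  Matrix.diagonal fun i => i.elim x fun _ => -x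

variable {g : ι → ι → K} {X : ι → A}

lemma isOspFamily_definingMatrix (hg : ∀ a b, g a b = -g b a) :
    IsOspFamily g (definingMatrix g) := by
  intro a b c
  ext (_ | i) (_ | j)
  case none.some =>
    simp only [Matrix.mul_apply, Matrix.add_apply, Matrix.sub_apply, Matrix.smul_apply,
      definingMatrix, Fintype.sum_option, ite_mul, one_mul, zero_mul, zero_add, mul_zero,
      Finset.sum_ite_eq, Finset.mem_univ, if_true, add_zero, Finset.sum_const_zero, hg b a]
    split_ifs <;> simp
  case some.none =>
    simp only [Matrix.mul_apply, Matrix.add_apply, Matrix.sub_apply, Matrix.smul_apply,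
      definingMatrix, Fintype.sum_option, add_mul, mul_ite, ite_mul, mul_one, one_mul, mul_zero,
      zero_mul, zero_add, add_zero, Finset.sum_add_distrib, Finset.sum_ite_eq, Finset.mem_univ,
      if_true, Finset.sum_const_zero, smul_eq_mul, hg a c, hg b c, hg b a]
    ring
  all_goals
    simp [Matrix.mul_apply, definingMatrix, Fintype.sum_option, add_mul, mul_add]

lemma isOspFamily_gradedDiagonal (hX : IsOspFamily g X) :
    IsOspFamily g fun a => gradedDiagonal ι (X a) := by
  have : IsOspFamily g fun a (i : Option ι) => i.elim (X a) fun _ => -X a :=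
    .pi (Option.rec hX fun _ => hX.neg)
  exact this.map (Matrix.diagonalAlgHom K)

lemma gradedDiagonal_mul_definingMatrix (x : A) (a : ι) :
    gradedDiagonal ι x * (definingMatrix g a).map (algebraMap K A) =
      -((definingMatrix g a).map (algebraMap K A) * gradedDiagonal ι x) := by
  ext (_ | i) (_ | j) <;>
    simp [gradedDiagonal, definingMatrix, Algebra.commutes, apply_ite (algebraMap K A)]

end Relations

section Enveloping

variable {K : Type*} {A : Type u} {ι : Type v} [CommRing K] [Ring A] [Algebra K A]

/-- `A`, with the odd generators `X a`, is the universal enveloping superalgebra of `osp` for the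
form `g`. The universe of `C` is that of the matrices over `A` indexed by `ι`. -/
structure IsOspEnveloping (g : ι → ι → K) (X : ι → A) : Prop where
  isOspFamily : IsOspFamily g X
  adjoin_eq_top : Algebra.adjoin K (Set.range X) = ⊤
  exists_lift : ∀ {C : Type max u v} [Ring C] [Algebra K C] {Y : ι → C}, IsOspFamily g Y →
    ∃ f : A →ₐ[K] C, ∀ a, f (X a) = Y a

variable (K) in
/-- The subalgebra generated by the bosonic elements `{X a, X b}`. -/
def bosonicSubalgebra (X : ι → A) : Subalgebra K A :=
  Algebra.adjoin K {x | ∃ a b, x = X a * X b + X b * X a}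

/-- The monomial `X (a 0) ⋯ X (a (p - 1))`. -/
def word (X : ι → A) {p : ℕ} (a : Fin p → ι) : A :=
  (List.ofFn fun i => X (a i)).prod

/-- The antisymmetrized monomial `[a₁ … a_p]`. -/
def bracket (X : ι → A) {p : ℕ} (a : Fin p → ι) : A :=
  ∑ s : Equiv.Perm (Fin p), (Equiv.Perm.sign s : ℤ) • word X fun i => a (s i)

variable (K) in
/-- The span `Ω` of the antisymmetrized monomials. -/
def bracketSpan (X : ι → A) : Submodule K A :=
  Submodule.span K {x | ∃ p, ∃ a : Fin p → ι, x = bracket X a}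

variable {X : ι → A}

variable (K) in
/-- The span of the monomials of length less than `k`. The strict inequality makes
`wordFiltration K X 0` vanish. -/
def wordFiltration (X : ι → A) (k : ℕ) : Submodule K A :=
  Submodule.span K {x | ∃ p < k, ∃ a : Fin p → ι, x = word X a}

lemma word_succ (X : ι → A) {p : ℕ} (a : Fin (p + 1) → ι) :
    word X a = X (a 0) * word X fun i => a i.succ := by
  rw [word, List.ofFn_succ, List.prod_cons, word]

lemma word_succ_last (X : ι → A) {p : ℕ} (a : Fin (p + 1) → ι) :
    word X a = (word X fun i => a i.castSucc) * X (a (Fin.last p)) := by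
  rw [word, List.ofFn_succ', List.prod_concat, word]

lemma word_mem_wordFiltration (X : ι → A) {p k : ℕ} (a : Fin p → ι) (hp : p < k) :
    word X a ∈ wordFiltration K X k :=
  Submodule.subset_span ⟨p, hp, a, rfl⟩

lemma wordFiltration_mono : Monotone (wordFiltration K X) := fun _ _ hk =>
  Submodule.span_mono fun _ ⟨p, hp, a, ha⟩ => ⟨p, hp.trans_le hk, a, ha⟩

lemma mul_mem_wordFiltration {k : ℕ} {u : A} (hu : u ∈ wordFiltration K X k) (a : ι) :
    u * X a ∈ wordFiltration K X (k + 1) := by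
  induction hu using Submodule.span_induction with
  | mem x hx =>
    obtain ⟨p, hp, b, rfl⟩ := hx
    have := word_mem_wordFiltration (K := K) X (Fin.snoc b a : Fin (p + 1) → ι)
      (Nat.succ_lt_succ hp)
    simpa [word_succ_last] using this
  | zero => simp
  | add x y _ _ hx hy => rw [add_mul]; exact add_mem hx hy
  | smul r x _ hx => rw [smul_mul_assoc]; exact Submodule.smul_mem _ r hx

end Enveloping

section Contraction

variable {K A ι : Type*} [CommRing K] [Ring A] [Algebra K A] [Fintype ι] [DecidableEq ι]

/-- `Δ` is the coproduct of the enveloping superalgebra followed by the defining representation on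
the second factor. -/
def IsDefiningCoaction (g : ι → ι → K) (X : ι → A)
    (Δ : A →ₐ[K] Matrix (Option ι) (Option ι) A) : Prop :=
  ∀ a, Δ (X a) = gradedDiagonal ι (X a) + (definingMatrix g a).map (algebraMap K A)

lemma IsOspEnveloping.exists_isDefiningCoaction {K : Type*} {A : Type u} {ι : Type v} [CommRing K]
    [Ring A] [Algebra K A] [Fintype ι] [DecidableEq ι] {g : ι → ι → K} {X : ι → A}
    (hg : ∀ a b, g a b = -g b a) (hX : IsOspEnveloping g X) :
    ∃ Δ : A →ₐ[K] Matrix (Option ι) (Option ι) A, IsDefiningCoaction g X Δ :=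
  hX.exists_lift <| (isOspFamily_gradedDiagonal hX.isOspFamily).add
    ((isOspFamily_definingMatrix hg).map (Algebra.ofId K A).mapMatrix)
    fun a b => gradedDiagonal_mul_definingMatrix (X a) b

/-- The odd skew derivation of `A` read off the row of the even basis vector in the coaction `Δ`.
It behaves like the contraction with the coordinate `c` of an exterior algebra. -/
def contraction (Δ : A →ₐ[K] Matrix (Option ι) (Option ι) A) (c : ι) : A →ₗ[K] A :=
  Matrix.entryLinearMap K A none (some c) ∘ₗ Δ.toLinearMap

/-- The composite `contraction Δ (c 0) ∘ ⋯ ∘ contraction Δ (c (p - 1))`. -/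
def iteratedContraction (Δ : A →ₐ[K] Matrix (Option ι) (Option ι) A) :
    {p : ℕ} → (Fin p → ι) → A →ₗ[K] A
  | 0, _ => LinearMap.id
  | p + 1, c =>
    iteratedContraction Δ (fun i => c i.castSucc) ∘ₗ contraction Δ (c (Fin.last p))

variable {g : ι → ι → K} {X : ι → A} {Δ : A →ₐ[K] Matrix (Option ι) (Option ι) A}

namespace IsDefiningCoaction

lemma apply_mul_none (hΔ : IsDefiningCoaction g X Δ) (u : A) (a : ι) :
    Δ (u * X a) none none = Δ u none none * X a + ∑ c, g a c • contraction Δ c u := by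
  simp [hΔ a, Matrix.mul_apply, Fintype.sum_option, gradedDiagonal, definingMatrix, contraction,
    Algebra.smul_def, Algebra.commutes]

lemma contraction_mul (hΔ : IsDefiningCoaction g X Δ) (u : A) (a c : ι) :
    contraction Δ c (u * X a) =
      (if a = c then Δ u none none else 0) - contraction Δ c u * X a := by
  simp [hΔ a, Matrix.mul_apply, Fintype.sum_option, gradedDiagonal, definingMatrix, contraction,
    Matrix.diagonal_apply, apply_ite (algebraMap K A), sub_eq_add_neg]

lemma apply_bosonic (hΔ : IsDefiningCoaction g X Δ) (hg : ∀ a b, g a b = -g b a) {b : A}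
    (hb : b ∈ bosonicSubalgebra K X) : Δ b none = Pi.single none b := by
  induction hb using Algebra.adjoin_induction with
  | mem x hx =>
    obtain ⟨a, b, rfl⟩ := hx
    ext (_ | c)
    · simp only [hΔ a, hΔ b, map_add, map_mul, Matrix.add_apply, Matrix.mul_apply,
        Matrix.map_apply, Fintype.sum_option, gradedDiagonal, definingMatrix,
        Matrix.diagonal_apply, Option.elim_none, reduceCtorEq, if_true, if_false,
        apply_ite (algebraMap K A), map_zero, map_one, map_neg, zero_add, add_zero, ite_mul,
        one_mul, zero_mul, Finset.sum_ite_eq, Finset.mem_univ, hg b a, Pi.single_eq_same]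
      abel
    · simp [hΔ a, hΔ b, Matrix.mul_apply, Fintype.sum_option, gradedDiagonal, definingMatrix,
        Matrix.diagonal_apply, apply_ite (algebraMap K A)]
  | algebraMap r =>
    ext (_ | c) <;> simp [Matrix.algebraMap_matrix_apply]
  | add x y _ _ hx hy => rw [map_add, Pi.single_add, ← hx, ← hy]; rfl
  | mul x y _ _ hx hy =>
    ext j
    simp [Matrix.mul_apply, hx, hy, Pi.single_apply, ite_mul, mul_ite]

lemma contraction_bosonic_mul (hΔ : IsDefiningCoaction g X Δ) (hg : ∀ a b, g a b = -g b a) {b : A}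
    (hb : b ∈ bosonicSubalgebra K X) (u : A) (c : ι) :
    contraction Δ c (b * u) = b * contraction Δ c u := by
  simp [contraction, Matrix.mul_apply, hΔ.apply_bosonic hg hb, Pi.single_apply, ite_mul]

lemma apply_word_sub_mem_and_contraction_word_mem (hΔ : IsDefiningCoaction g X Δ) {p : ℕ}
    (a : Fin p → ι) :
    Δ (word X a) none none - word X a ∈ wordFiltration K X p ∧
      ∀ c, contraction Δ c (word X a) ∈ wordFiltration K X p := by
  induction p with
  | zero => simp [word, contraction]
  | succ p ih =>
    obtain ⟨ihΔ, ihc⟩ := ih fun i => a i.castSucc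
    set u := word X fun i => a i.castSucc with hu
    have hmono := wordFiltration_mono (K := K) (X := X) p.le_succ
    rw [word_succ_last, ← hu]
    refine ⟨?_, fun c => ?_⟩
    · rw [hΔ.apply_mul_none, add_sub_right_comm, ← sub_mul]
      exact add_mem (mul_mem_wordFiltration ihΔ _)
        (sum_mem fun c _ => Submodule.smul_mem _ _ (hmono (ihc c)))
    · rw [hΔ.contraction_mul]
      refine sub_mem ?_ (mul_mem_wordFiltration (ihc c) _)
      split_ifs
      · rw [← sub_add_cancel (Δ u none none) u]
        exact add_mem (hmono ihΔ) (word_mem_wordFiltration X _ p.lt_succ_self)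
      · exact zero_mem _

lemma contraction_mem_wordFiltration (hΔ : IsDefiningCoaction g X Δ) {k : ℕ} {u : A}
    (hu : u ∈ wordFiltration K X (k + 1)) (c : ι) :
    contraction Δ c u ∈ wordFiltration K X k := by
  induction hu using Submodule.span_induction with
  | mem x hx =>
    obtain ⟨p, hp, b, rfl⟩ := hx
    exact wordFiltration_mono (Nat.le_of_lt_succ hp)
      ((hΔ.apply_word_sub_mem_and_contraction_word_mem b).2 c)
  | zero => simp
  | add x y _ _ hx hy => rw [map_add]; exact add_mem hx hy
  | smul r x _ hx => rw [map_smul]; exact Submodule.smul_mem _ r hx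

lemma contraction_word_sub_mem (hΔ : IsDefiningCoaction g X Δ) {p : ℕ} (a : Fin (p + 1) → ι)
    (c : ι) :
    contraction Δ c (word X a) -
        ∑ i : Fin (p + 1), ((-1) ^ (p + i : ℕ) * (1 : Matrix ι ι K) c (a i)) •
          word X (fun j => a (i.succAbove j)) ∈
      wordFiltration K X p := by
  have head_mem {p : ℕ} (b : Fin p → ι) (d : ι) :
      (if d = c then Δ (word X b) none none else 0) - (1 : Matrix ι ι K) c d • word X b ∈
        wordFiltration K X p := by
    rcases eq_or_ne d c with rfl | h
    · simpa using (hΔ.apply_word_sub_mem_and_contraction_word_mem b).1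
    · simp [h, Matrix.one_apply_ne' h]
  induction p with
  | zero =>
    have := hΔ.contraction_mul 1 (a 0) c
    have h1 : contraction Δ c 1 = 0 := by simp [contraction]
    rw [one_mul, h1, zero_mul, sub_zero] at this
    simpa [word, this] using head_mem Fin.elim0 (a 0)
  | succ p ih =>
    have word_succAbove (i : Fin (p + 1)) : (word X fun j => a (i.castSucc.succAbove j)) =
        (word X fun j => a (i.succAbove j).castSucc) * X (a (Fin.last _)) := by
      simp [word_succ_last]
    have sign_succ (i : ℕ) : (-1 : K) ^ (p + 1 + i) = -(-1) ^ (p + i) := by ring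
    have sign_last : (-1 : K) ^ (p + 1 + (p + 1)) = 1 := Even.neg_one_pow ⟨_, rfl⟩
    have := sub_mem (head_mem (fun i => a i.castSucc) (a (Fin.last _)))
      (mul_mem_wordFiltration (ih fun i => a i.castSucc) (a (Fin.last _)))
    convert this using 1
    rw [word_succ_last, hΔ.contraction_mul, Fin.sum_univ_castSucc, Fin.val_last, sign_last, one_mul]
    simp only [word_succAbove, Fin.succAbove_last, Fin.val_castSucc, sign_succ, sub_mul,
      Finset.sum_mul, smul_mul_assoc, neg_mul, neg_smul, Finset.sum_neg_distrib]
    abel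

lemma iteratedContraction_bosonic_mul (hΔ : IsDefiningCoaction g X Δ) (hg : ∀ a b, g a b = -g b a)
    {b : A} (hb : b ∈ bosonicSubalgebra K X) {p : ℕ} (c : Fin p → ι) (u : A) :
    iteratedContraction Δ c (b * u) = b * iteratedContraction Δ c u := by
  induction p generalizing u with
  | zero => rfl
  | succ p ih =>
    simp only [iteratedContraction, LinearMap.comp_apply, hΔ.contraction_bosonic_mul hg hb, ih]

lemma iteratedContraction_eq_zero (hΔ : IsDefiningCoaction g X Δ) {p : ℕ} (c : Fin p → ι)
    {u : A} (hu : u ∈ wordFiltration K X p) : iteratedContraction Δ c u = 0 := by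
  induction p generalizing u with
  | zero => simpa [wordFiltration, iteratedContraction] using hu
  | succ p ih => exact ih _ (hΔ.contraction_mem_wordFiltration hu _)

/-- Modulo shorter monomials, the contraction rule becomes the Laplace expansion of the determinant
along its last row. -/
lemma iteratedContraction_word (hΔ : IsDefiningCoaction g X Δ) {p : ℕ} (c a : Fin p → ι) :
    iteratedContraction Δ c (word X a) =
      algebraMap K A ((1 : Matrix ι ι K).submatrix c a).det := by
  induction p with
  | zero => simp [iteratedContraction, word]
  | succ p ih =>
    have := hΔ.iteratedContraction_eq_zero (fun i => c i.castSucc)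
      (hΔ.contraction_word_sub_mem a (c (Fin.last p)))
    rw [map_sub, sub_eq_zero] at this
    rw [iteratedContraction, LinearMap.comp_apply, this, Matrix.det_succ_row _ (Fin.last p),
      map_sum, map_sum]
    refine Finset.sum_congr rfl fun i _ => ?_
    rw [map_smul, ih, Algebra.smul_def, ← map_mul, Matrix.submatrix_submatrix, Fin.succAbove_last,
      Fin.val_last, Matrix.submatrix_apply]
    rfl

lemma iteratedContraction_bracket (hΔ : IsDefiningCoaction g X Δ) {p : ℕ} (c a : Fin p → ι) :
    iteratedContraction Δ c (bracket X a) =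
      (p ! : K) • algebraMap K A ((1 : Matrix ι ι K).submatrix c a).det := by
  have summand (s : Equiv.Perm (Fin p)) :
      (Equiv.Perm.sign s : ℤ) • iteratedContraction Δ c (word X fun i => a (s i)) =
        algebraMap K A ((1 : Matrix ι ι K).submatrix c a).det := by
    have det_perm := Matrix.det_permute' s ((1 : Matrix ι ι K).submatrix c a)
    rw [Matrix.submatrix_submatrix] at det_perm
    rw [hΔ.iteratedContraction_word]
    rcases Int.units_eq_one_or s.sign with hs | hs <;> simp_all [Function.comp_def]
  simp only [bracket, map_sum, map_zsmul, summand]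
  simp [Fintype.card_perm, Algebra.smul_def]

end IsDefiningCoaction

end Contraction

section OrderedBrackets

lemma det_submatrix_one_orderEmbedding (K : Type*) [CommRing K] {ι : Type*} [LinearOrder ι] {p : ℕ}
    (c a : Fin p ↪o ι) : ((1 : Matrix ι ι K).submatrix c a).det = if a = c then 1 else 0 := by
  split_ifs with h
  · rw [h, Matrix.submatrix_one c c.injective, Matrix.det_one]
  · obtain ⟨i, hi⟩ : ∃ i, c i ∉ Set.range a := by
      by_contra! hca
      have range_eq : Set.range c = Set.range a :=
        Set.eq_of_subset_of_ncard_le (Set.range_subset_iff.mpr hca)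
          (by simp [Set.ncard_range_of_injective, c.injective, a.injective]) (Set.finite_range a)
      exact h (DFunLike.coe_injective ((a.strictMono.range_inj c.strictMono).mp range_eq.symm))
    exact Matrix.det_eq_zero_of_row_eq_zero i fun j => Matrix.one_apply_ne fun hj => hi ⟨j, hj.symm⟩

lemma isUnit_factorial (K : Type*) [CommRing K] [Algebra ℚ K] (p : ℕ) : IsUnit (p ! : K) := by
  simpa using (IsUnit.mk0 (p ! : ℚ) (mod_cast p.factorial_ne_zero)).map (algebraMap ℚ K)

variable {K A ι : Type*} [CommRing K] [Ring A] [Algebra K A] {g : ι → ι → K} {X : ι → A}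

lemma bracket_mem_wordFiltration {p k : ℕ} (a : Fin p → ι) (hp : p < k) :
    bracket X a ∈ wordFiltration K X k :=
  sum_mem fun _ _ => zsmul_mem (word_mem_wordFiltration X _ hp) _

lemma bracket_eq_alternatization (X : ι → A) {p : ℕ} (a : Fin p → ι) :
    bracket X a =
      MultilinearMap.alternatization (MultilinearMap.mkPiAlgebraFin ℤ p A) fun i => X (a i) := by
  rw [MultilinearMap.alternatization_apply]
  rfl

lemma bracket_comp_perm (X : ι → A) {p : ℕ} (a : Fin p → ι) (s : Equiv.Perm (Fin p)) :
    (bracket X fun i => a (s i)) = Equiv.Perm.sign s • bracket X a := by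
  simp only [bracket_eq_alternatization]
  exact (MultilinearMap.alternatization (MultilinearMap.mkPiAlgebraFin ℤ p A)).map_perm
    (fun i => X (a i)) s

lemma bracket_eq_zero_of_not_injective (X : ι → A) {p : ℕ} {a : Fin p → ι}
    (ha : ¬ Function.Injective a) : bracket X a = 0 := by
  rw [bracket_eq_alternatization]
  have hXa : ¬ Function.Injective fun i => X (a i) := fun h => ha (.of_comp (f := X) h)
  exact AlternatingMap.map_eq_zero_of_not_injective (R := ℤ) _ _ hXa

lemma bracketSpan_eq_span_orderEmbedding [LinearOrder ι] :
    bracketSpan K X = Submodule.span K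
      (Set.range fun I : Σ p, Fin p ↪o ι => bracket X I.2) := by
  refine le_antisymm (Submodule.span_le.mpr ?_) (Submodule.span_mono ?_)
  · rintro _ ⟨p, a, rfl⟩
    by_cases ha : Function.Injective a
    · have sorted : StrictMono (a ∘ Tuple.sort a) :=
        (Tuple.monotone_sort a).strictMono_of_injective (ha.comp (Tuple.sort a).injective)
      have : (bracket X fun i => a (Tuple.sort a i)) ∈
          Submodule.span K (Set.range fun I : Σ p, Fin p ↪o ι => bracket X I.2) :=
        Submodule.subset_span ⟨⟨p, OrderEmbedding.ofStrictMono _ sorted⟩, rfl⟩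
      rw [bracket_comp_perm] at this
      rcases Int.units_eq_one_or (Equiv.Perm.sign (Tuple.sort a)) with h | h <;>
        simpa [h] using this
    · rw [bracket_eq_zero_of_not_injective X ha]
      exact zero_mem _
  · rintro _ ⟨I, rfl⟩
    exact ⟨I.1, I.2, rfl⟩

variable [LinearOrder ι] [Fintype ι] {Δ : A →ₐ[K] Matrix (Option ι) (Option ι) A}

lemma IsDefiningCoaction.iteratedContraction_bracket_orderEmbedding (hΔ : IsDefiningCoaction g X Δ)
    (I J : Σ p, Fin p ↪o ι) (hJI : J.1 ≤ I.1) :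
    iteratedContraction Δ I.2 (bracket X J.2) = if J = I then algebraMap K A (I.1 !) else 0 := by
  obtain ⟨p, c⟩ := I
  obtain ⟨q, a⟩ := J
  rcases hJI.eq_or_lt with rfl | hlt
  · rw [hΔ.iteratedContraction_bracket, det_submatrix_one_orderEmbedding]
    by_cases h : a = c <;> simp [h, Algebra.smul_def]
  · rw [if_neg fun h => hlt.ne (congrArg Sigma.fst h)]
    exact hΔ.iteratedContraction_eq_zero c (bracket_mem_wordFiltration a hlt)

lemma linearIndependent_bracket [Algebra ℚ K] (hg : ∀ a b, g a b = -g b a)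
    (hΔ : IsDefiningCoaction g X Δ) :
    LinearIndependent (bosonicSubalgebra K X) fun I : Σ p, Fin p ↪o ι => bracket X I.2 := by
  rw [linearIndependent_iff]
  intro f hf
  by_contra hf0
  obtain ⟨I, hI, hmax⟩ :=
    f.support.exists_max_image Sigma.fst (Finsupp.support_nonempty_iff.mpr hf0)
  have top_coeff : iteratedContraction Δ I.2
      (Finsupp.linearCombination _ (fun J : Σ p, Fin p ↪o ι => bracket X J.2) f) =
        f I * algebraMap K A (I.1 !) := by
    rw [Finsupp.linearCombination_apply, Finsupp.sum, map_sum, Finset.sum_eq_single_of_mem I hI]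
    · rw [Subalgebra.smul_def, smul_eq_mul, hΔ.iteratedContraction_bosonic_mul hg (f I).2,
        hΔ.iteratedContraction_bracket_orderEmbedding I I le_rfl, if_pos rfl]
    · intro J hJ hJI
      rw [Subalgebra.smul_def, smul_eq_mul, hΔ.iteratedContraction_bosonic_mul hg (f J).2,
        hΔ.iteratedContraction_bracket_orderEmbedding I J (hmax J hJ), if_neg hJI, mul_zero]
  rw [hf, map_zero] at top_coeff
  have : (f I : A) = 0 :=
    ((isUnit_factorial K I.1).map (algebraMap K A)).mul_left_eq_zero.mp top_coeff.symm
  exact Finsupp.mem_support_iff.mp hI (Subtype.ext this)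

end OrderedBrackets

lemma mulMap_injective_of_linearIndependent {K A κ : Type*} [CommRing K] [Ring A] [Algebra K A]
    (S : Subalgebra K A) {v : κ → A} (hv : LinearIndependent S v) :
    Function.Injective
      (Submodule.mulMap (Subalgebra.toSubmodule S) (Submodule.span K (Set.range v))) := by
  let N := Submodule.span K (Set.range v)
  let w (i : κ) : N := ⟨v i, Submodule.subset_span ⟨i, rfl⟩⟩
  have span_w : Submodule.span K (Set.range w) = ⊤ :=
    (Submodule.span_range_subtype_eq_top_iff N _).mpr rfl
  let sumTmul : (κ →₀ S) →ₗ[K] S ⊗[K] N :=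
    Finsupp.lsum K fun i => (TensorProduct.mk K S N).flip (w i)
  have sumTmul_surjective : Function.Surjective sumTmul := by
    rw [← LinearMap.range_eq_top, eq_top_iff, ← TensorProduct.span_tmul_eq_top, Submodule.span_le]
    rintro _ ⟨s, x, rfl⟩
    have : ⊤ ≤ (LinearMap.range sumTmul).comap (TensorProduct.mk K S N s) := by
      rw [← span_w, Submodule.span_le]
      rintro _ ⟨i, rfl⟩
      exact ⟨Finsupp.single i s, by simp [sumTmul]⟩
    exact this (Submodule.mem_top (x := x))
  have mulMap_comp_sumTmul :
      Submodule.mulMap (Subalgebra.toSubmodule S) N ∘ sumTmul = Finsupp.linearCombination S v := by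
    ext f
    simp only [sumTmul, Function.comp_apply, Finsupp.lsum_apply,
      Finsupp.linearCombination_apply, Finsupp.sum, map_sum]
    rfl
  refine .of_comp_right (g := sumTmul) ?_ sumTmul_surjective
  exact mulMap_comp_sumTmul ▸ hv

section Surjectivity

variable {K A ι : Type*} [CommRing K] [Ring A] [Algebra K A] {g : ι → ι → K} {X : ι → A}

lemma span_range_pow (X : ι → A) (p : ℕ) :
    Submodule.span K (Set.range X) ^ p = Submodule.span K (Set.range (word X (p := p))) := by
  rw [Submodule.span_pow]
  congr 1
  ext x
  rw [Set.mem_pow]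
  constructor
  · rintro ⟨f, rfl⟩
    choose a ha using fun i => (f i).2
    exact ⟨a, by simp only [word, ha]⟩
  · rintro ⟨a, rfl⟩
    exact ⟨fun i => ⟨X (a i), a i, rfl⟩, rfl⟩

lemma word_mem_span_pow (X : ι → A) {p : ℕ} (a : Fin p → ι) :
    word X a ∈ Submodule.span K (Set.range X) ^ p :=
  span_range_pow (K := K) X p ▸ Submodule.subset_span ⟨a, rfl⟩

lemma exists_mem_span_pow_of_mem_closure {x : A} (hx : x ∈ Submonoid.closure (Set.range X)) :
    ∃ p, x ∈ Submodule.span K (Set.range X) ^ p := by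
  induction hx using Submonoid.closure_induction with
  | mem x hx => exact ⟨1, by simpa using Submodule.subset_span hx⟩
  | one => exact ⟨0, Submodule.mem_one.mpr ⟨1, map_one _⟩⟩
  | mul x y _ _ hx hy =>
    obtain ⟨⟨p, hp⟩, q, hq⟩ := And.intro hx hy
    exact ⟨p + q, by rw [pow_add]; exact Submodule.mul_mem_mul hp hq⟩

variable (K) in
/-- The left module over the bosonic subalgebra generated by the monomials of length `p`. -/
def bosonicSpan (X : ι → A) (p : ℕ) : Submodule K A :=
  Subalgebra.toSubmodule (bosonicSubalgebra K X) * Submodule.span K (Set.range X) ^ p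

lemma anticommutator_mem_bosonicSubalgebra (X : ι → A) (a b : ι) :
    X a * X b + X b * X a ∈ bosonicSubalgebra K X :=
  Algebra.subset_adjoin ⟨a, b, rfl⟩

lemma anticommutator_mul_word_mem_bosonicSpan (X : ι → A) (b c : ι) {p : ℕ} (a : Fin p → ι) :
    (X b * X c + X c * X b) * word X a ∈ bosonicSpan K X p :=
  Submodule.mul_mem_mul (anticommutator_mem_bosonicSubalgebra X b c) (word_mem_span_pow X a)

lemma bosonic_mul_mem_bosonicSpan {b : A} (hb : b ∈ bosonicSubalgebra K X) (c : ι) :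
    b * X c ∈ bosonicSpan K X 1 :=
  Submodule.mul_mem_mul hb (by
    rw [pow_one]
    exact Submodule.subset_span (Set.mem_range_self c))

lemma IsOspFamily.mul_anticommutator_mem (hX : IsOspFamily g X) {w : A}
    (hw : w ∈ bosonicSpan K X 1) (a b : ι) :
    w * (X a * X b + X b * X a) ∈ bosonicSpan K X 1 := by
  induction hw using Submodule.mul_induction_on' with
  | mem_mul_mem m hm v hv =>
    rw [pow_one] at hv
    induction hv using Submodule.span_induction with
    | mem x hx =>
      obtain ⟨c, rfl⟩ := hx
      have move_right : m * X c * (X a * X b + X b * X a) =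
          m * (X a * X b + X b * X a) * X c + g a c • (m * X b) + g b c • (m * X a) := by
        rw [mul_assoc, mul_assoc, hX a b c]
        simp only [mul_sub, mul_smul_comm]
        abel
      rw [move_right]
      exact add_mem (add_mem
        (bosonic_mul_mem_bosonicSpan (mul_mem hm (anticommutator_mem_bosonicSubalgebra X a b)) c)
        (Submodule.smul_mem _ _ (bosonic_mul_mem_bosonicSpan hm b)))
        (Submodule.smul_mem _ _ (bosonic_mul_mem_bosonicSpan hm a))
    | zero => simp
    | add x y _ _ hx hy => rw [mul_add m, add_mul (m * x)]; exact add_mem hx hy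
    | smul r x _ hx =>
      rw [mul_smul_comm, smul_mul_assoc]
      exact Submodule.smul_mem _ r hx
  | add x _ y _ hx hy => rw [add_mul]; exact add_mem hx hy

lemma IsOspFamily.mul_bosonic_mem (hX : IsOspFamily g X) {b : A} (hb : b ∈ bosonicSubalgebra K X)
    {w : A} (hw : w ∈ bosonicSpan K X 1) : w * b ∈ bosonicSpan K X 1 := by
  induction hb using Algebra.adjoin_induction generalizing w with
  | mem x hx =>
    obtain ⟨a, b, rfl⟩ := hx
    exact hX.mul_anticommutator_mem hw a b
  | algebraMap r =>
    rw [← Algebra.commutes, ← Algebra.smul_def]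
    exact Submodule.smul_mem _ r hw
  | add x y _ _ hx hy => rw [mul_add]; exact add_mem (hx hw) (hy hw)
  | mul x y _ _ hx hy => rw [← mul_assoc]; exact hy (hx hw)

lemma IsOspFamily.mul_mem_bosonicSpan (hX : IsOspFamily g X) {p : ℕ} {x : A}
    (hx : x ∈ bosonicSpan K X p) (c : ι) : X c * x ∈ bosonicSpan K X (p + 1) := by
  have : bosonicSpan K X 1 * Submodule.span K (Set.range X) ^ p = bosonicSpan K X (p + 1) := by
    rw [bosonicSpan, bosonicSpan, mul_assoc, add_comm p, pow_add]
  induction hx using Submodule.mul_induction_on' with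
  | mem_mul_mem b hb w hw =>
    rw [← mul_assoc, ← this]
    have hc : X c ∈ bosonicSpan K X 1 := by
      simpa using bosonic_mul_mem_bosonicSpan (one_mem (bosonicSubalgebra K X)) c
    exact Submodule.mul_mem_mul (hX.mul_bosonic_mem hb hc) hw
  | add x _ y _ hx hy => rw [mul_add]; exact add_mem hx hy

lemma IsOspFamily.word_swap_add_word_mem (hX : IsOspFamily g X) {p : ℕ} (a : Fin (p + 2) → ι)
    (i : Fin (p + 1)) :
    (word X fun j => a (Equiv.swap i.castSucc i.succ j)) + word X a ∈ bosonicSpan K X p := by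
  cases i using Fin.cases with
  | zero =>
    have swap_fix (j : Fin p) : Equiv.swap (0 : Fin (p + 2)) 1 j.succ.succ = j.succ.succ :=
      Equiv.swap_apply_of_ne_of_ne (Fin.succ_ne_zero _)
        fun h => Fin.succ_ne_zero j (Fin.succ_injective _ h)
    have := anticommutator_mul_word_mem_bosonicSpan (K := K) X (a 1) (a 0) fun j => a j.succ.succ
    simpa [word_succ, swap_fix, add_mul, mul_assoc] using this
  | succ i =>
    cases p with
    | zero => exact i.elim0
    | succ p =>
      have swap_zero : Equiv.swap i.succ.castSucc i.succ.succ 0 = 0 :=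
        Equiv.swap_apply_of_ne_of_ne (Fin.succ_ne_zero i.castSucc).symm (Fin.succ_ne_zero _).symm
      have swap_succ (j : Fin (p + 2)) : Equiv.swap i.succ.castSucc i.succ.succ j.succ =
          (Equiv.swap i.castSucc i.succ j).succ := by
        rw [← Fin.succ_castSucc]
        exact (Fin.succ_injective _).swap_apply _ _ _
      have := hX.mul_mem_bosonicSpan (hX.word_swap_add_word_mem (fun j => a j.succ) i) (a 0)
      simpa only [word_succ X (p := p + 2), swap_zero, swap_succ, mul_add] using this

lemma IsOspFamily.word_perm_sub_mem (hX : IsOspFamily g X) {p : ℕ} (a : Fin (p + 2) → ι)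
    (s : Equiv.Perm (Fin (p + 2))) :
    (word X fun i => a (s i)) - (Equiv.Perm.sign s : ℤ) • word X a ∈ bosonicSpan K X p := by
  have hs : s ∈ Submonoid.closure
      (Set.range fun i : Fin (p + 1) => Equiv.swap i.castSucc i.succ) := by
    rw [Equiv.Perm.mclosure_swap_castSucc_succ]; trivial
  induction hs using Submonoid.closure_induction generalizing a with
  | mem s hs =>
    obtain ⟨i, rfl⟩ := hs
    simpa [Equiv.Perm.sign_swap i.castSucc_lt_succ.ne] using hX.word_swap_add_word_mem a i
  | one => simp
  | mul s t _ _ hs ht =>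
    convert add_mem (ht fun i => a (s i)) (zsmul_mem (hs a) (Equiv.Perm.sign t : ℤ)) using 1
    simp only [Equiv.Perm.sign_mul, Units.val_mul, smul_sub, smul_smul, Equiv.Perm.mul_apply,
      mul_comm (Equiv.Perm.sign s : ℤ), sub_add_sub_cancel]

lemma bracket_of_subsingleton (X : ι → A) {p : ℕ} [Subsingleton (Fin p)] (a : Fin p → ι) :
    bracket X a = word X a := by
  simp [bracket]

lemma IsOspFamily.bracket_sub_mem (hX : IsOspFamily g X) {p : ℕ} (a : Fin (p + 2) → ι) :
    bracket X a - ((p + 2)! : K) • word X a ∈ bosonicSpan K X p := by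
  have sum_eq : bracket X a - ((p + 2)! : K) • word X a =
      ∑ s : Equiv.Perm (Fin (p + 2)), (Equiv.Perm.sign s : ℤ) •
        ((word X fun i => a (s i)) - (Equiv.Perm.sign s : ℤ) • word X a) := by
    simp only [smul_sub, smul_smul, ← Units.val_mul, Int.units_mul_self, Units.val_one, one_smul,
      Finset.sum_sub_distrib, bracket]
    simp [Fintype.card_perm, ← Nat.cast_smul_eq_nsmul K]
  rw [sum_eq]
  exact sum_mem fun s _ => zsmul_mem (hX.word_perm_sub_mem a s) _

lemma IsOspFamily.span_pow_le [Algebra ℚ K] (hX : IsOspFamily g X) (p : ℕ) :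
    Submodule.span K (Set.range X) ^ p ≤
      Subalgebra.toSubmodule (bosonicSubalgebra K X) * bracketSpan K X := by
  have bracket_mem {p : ℕ} (a : Fin p → ι) :
      bracket X a ∈ Subalgebra.toSubmodule (bosonicSubalgebra K X) * bracketSpan K X := by
    rw [← one_mul (bracket X a)]
    exact Submodule.mul_mem_mul (one_mem (bosonicSubalgebra K X))
      (Submodule.subset_span ⟨p, a, rfl⟩)
  have word_mem (p : ℕ) [Subsingleton (Fin p)] (a : Fin p → ι) :
      word X a ∈ Subalgebra.toSubmodule (bosonicSubalgebra K X) * bracketSpan K X :=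
    bracket_of_subsingleton X a ▸ bracket_mem a
  rw [span_range_pow, Submodule.span_le]
  rintro _ ⟨a, rfl⟩
  induction p using Nat.twoStepInduction with
  | zero => exact word_mem 0 a
  | one => exact word_mem 1 a
  | more p ih _ =>
    have span_pow_le : Submodule.span K (Set.range X) ^ p ≤
        Subalgebra.toSubmodule (bosonicSubalgebra K X) * bracketSpan K X := by
      rw [span_range_pow, Submodule.span_le]
      rintro _ ⟨a, rfl⟩
      exact ih a
    have bosonicSpan_le : bosonicSpan K X p ≤
        Subalgebra.toSubmodule (bosonicSubalgebra K X) * bracketSpan K X := by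
      refine (mul_le_mul' le_rfl span_pow_le).trans_eq ?_
      rw [← mul_assoc, (bosonicSubalgebra K X).isIdempotentElem_toSubmodule.eq]
    have smul_word_mem := sub_mem (bracket_mem a) (bosonicSpan_le (hX.bracket_sub_mem a))
    rw [sub_sub_cancel] at smul_word_mem
    exact (Submodule.smul_mem_iff_of_isUnit _ (isUnit_factorial K _)).mp smul_word_mem

lemma IsOspFamily.bosonic_mul_bracketSpan [Algebra ℚ K] (hX : IsOspFamily g X)
    (hgen : Algebra.adjoin K (Set.range X) = ⊤) :
    Subalgebra.toSubmodule (bosonicSubalgebra K X) * bracketSpan K X = ⊤ := by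
  rw [eq_top_iff, ← Algebra.top_toSubmodule, ← hgen, Algebra.adjoin_eq_span, Submodule.span_le]
  intro x hx
  obtain ⟨p, hp⟩ := exists_mem_span_pow_of_mem_closure (K := K) hx
  exact hX.span_pow_le p hp

end Surjectivity

theorem stmt0_general {K : Type*} {A : Type u} {ι : Type v} [CommRing K] [Algebra ℚ K] [Ring A]
    [Algebra K A] [Finite ι] {g : ι → ι → K} {X : ι → A} (hg : ∀ a b, g a b = -g b a)
    (hX : IsOspEnveloping g X) :
    Function.Bijective
      (Submodule.mulMap (Subalgebra.toSubmodule (bosonicSubalgebra K X)) (bracketSpan K X)) := by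
  constructor
  · have := Fintype.ofFinite ι
    let := LinearOrder.lift' (Fintype.equivFin ι) (Fintype.equivFin ι).injective
    obtain ⟨Δ, hΔ⟩ := hX.exists_isDefiningCoaction hg
    rw [bracketSpan_eq_span_orderEmbedding]
    exact mulMap_injective_of_linearIndependent _ (linearIndependent_bracket hg hΔ)
  · rw [← LinearMap.range_eq_top, Submodule.mulMap_range]
    exact hX.isOspFamily.bosonic_mul_bracketSpan hX.adjoin_eq_top

lemma gmat_antisymm (n : ℕ) (a b : Fin (2 * n)) : gmat n a b = -gmat n b a := by
  unfold gmat
  split_ifs <;> first | omega | norm_num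

lemma isOspFamily_σ (n : ℕ) : IsOspFamily (gmat n) (σ n) := fun a b c => by
  simpa only [σ, map_mul, map_add, map_sub, map_smul, ← Algebra.smul_def]
    using RingQuot.mkAlgHom_rel ℚ (OspRel.rel a b c)

lemma adjoin_range_σ (n : ℕ) : Algebra.adjoin ℚ (Set.range (σ n)) = ⊤ := by
  have range_eq : Set.range (σ n) =
      RingQuot.mkAlgHom ℚ (OspRel n) '' Set.range (FreeAlgebra.ι ℚ) :=
    Set.range_comp _ _
  rw [range_eq, ← AlgHom.map_adjoin, FreeAlgebra.adjoin_range_ι, Algebra.map_top,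
    AlgHom.range_eq_top]
  exact RingQuot.mkAlgHom_surjective ℚ (OspRel n)

lemma isOspEnveloping_σ (n : ℕ) : IsOspEnveloping (gmat n) (σ n) where
  isOspFamily := isOspFamily_σ n
  adjoin_eq_top := adjoin_range_σ n
  exists_lift {C} _ _ Y hY := by
    refine ⟨RingQuot.liftAlgHom ℚ ⟨FreeAlgebra.lift ℚ Y, ?_⟩, fun a => ?_⟩
    · rintro _ _ ⟨a, b, c⟩
      simpa only [map_mul, map_add, map_sub, map_smul, FreeAlgebra.lift_ι_apply,
        ← Algebra.smul_def] using hY a b c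
    · simp [σ]

/-- The multiplication map `B ⊗_ℚ Ω → U(osp(1|2n))`, `b ⊗ ω ↦ b·ω`, is a
linear isomorphism of `ℚ`-vector spaces: `U(osp(1|2n)) = U(sp(2n)) ⊗ Ω`. -/
theorem stmt0 (n : ℕ) (hn : 1 ≤ n) : Function.Bijective (mulMap n) := by
  exact stmt0_general (gmat_antisymm n) (isOspEnveloping_σ n)

end
end

section
/- In the bosonic oscillator realization W_n, for every 0 ≤ k ≤ n the element A^{(n)}_{2k} — the sum, over all k-element subsets {α_1 < ⋯ < α_k} ⊆ {1, …, n}, of the antisymmetrized monomial [α_1, α_1+n, α_2, α_2+n, …, α_k, α_k+n] — equals the scalar 2^{−k} · n!/(n−k)! · 1. -/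
open scoped BigOperators
open Nat

noncomputable section

/-- The bosonic oscillator relations `σₐσ_b − σ_bσₐ = −(1/2) g_{ab}`. -/
inductive WeylRel (n : ℕ) : FreeAlgebra ℚ (Fin (2*n)) → FreeAlgebra ℚ (Fin (2*n)) → Prop
  | rel (a b : Fin (2*n)) : WeylRel n
      (FreeAlgebra.ι ℚ a * FreeAlgebra.ι ℚ b)
      (FreeAlgebra.ι ℚ b * FreeAlgebra.ι ℚ a
        - algebraMap ℚ (FreeAlgebra ℚ (Fin (2*n))) (gmat n a b / 2))

/-- The bosonic oscillator (Weyl) realization `W_n`. -/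
abbrev W (n : ℕ) := RingQuot (WeylRel n)

/-- The oscillator generators `σₐ`. -/
def σw (n : ℕ) (a : Fin (2*n)) : W n :=
  RingQuot.mkAlgHom ℚ (WeylRel n) (FreeAlgebra.ι ℚ a)

/-- The antisymmetrized monomial `[a₁ … a_p]` in `W_n`. -/
def brktW (n : ℕ) (p : ℕ) (a : Fin p → Fin (2*n)) : W n :=
  ∑ s : Equiv.Perm (Fin p),
    (Equiv.Perm.sign s : ℤ) • (List.ofFn fun i => σw n (a (s i))).prod

/-- For a subset `T = {α₁ < … < α_m} ⊆ {1,…,n}`, the tuple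
`(α₁, α₁+n, α₂, α₂+n, …, α_m, α_m+n)` (0-indexed). -/
def pairTupleW (n : ℕ) (T : Finset (Fin n)) : Fin (2*T.card) → Fin (2*n) := fun j =>
  let β : Fin n := T.orderEmbOfFin rfl ⟨(j:ℕ)/2, by have := j.isLt; omega⟩
  if (j:ℕ) % 2 = 0 then ⟨(β:ℕ), by have := β.isLt; omega⟩
  else ⟨(β:ℕ) + n, by have := β.isLt; omega⟩

/-- `A^{(n)}_{2m} ∈ W_n`, the sum over all `m`-element subsets `{α₁ < … < α_m} ⊆ {1,…,n}` of
the antisymmetrized monomials `[α₁, α₁+n, …, α_m, α_m+n]`. -/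
def AcalW (n m : ℕ) : W n :=
  ∑ T ∈ Finset.powersetCard m (Finset.univ : Finset (Fin n)),
    brktW n (2*T.card) (pairTupleW n T)

/-!
Antisymmetrizing a product of `k` pairs replaces each pair by half its commutator. The commutators
`⁅σ_a, σ_b⁆` are scalars, so `2 ^ k • [α₁, α₁+n, …, α_k, α_k+n]` is a signed sum, over permutations
of the `2k` positions, of products of `k` entries of the symplectic form. As the form pairs `α` only
with `α + n`, just the permutations mapping pairs to pairs contribute: `k !` rearrangements of the
pairs times `2 ^ k` swaps inside them, whose signs cancel the skew-symmetry of the form. Every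
monomial therefore equals `k ! / 2 ^ k`, and there are `n.choose k` of them.
-/

section BlockPerm

variable {κ ι : Type*}

/-- The permutation of `κ × ι` that permutes the inside of each block `κ × {i}` by `e i` and then
permutes the blocks among themselves by `t`. -/
def blockPerm (t : Equiv.Perm ι) (e : ι → Equiv.Perm κ) : Equiv.Perm (κ × ι) :=
  Equiv.prodCongrRight (fun _ => t) * Equiv.prodCongrLeft e

theorem blockPerm_apply (t : Equiv.Perm ι) (e : ι → Equiv.Perm κ) (a : κ) (i : ι) :
    blockPerm t e (a, i) = (e i a, t i) := rfl

theorem sign_blockPerm [Fintype κ] [DecidableEq κ] [Fintype ι] [DecidableEq ι]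
    (t : Equiv.Perm ι) (e : ι → Equiv.Perm κ) :
    Equiv.Perm.sign (blockPerm t e) =
      Equiv.Perm.sign t ^ Fintype.card κ * ∏ i, Equiv.Perm.sign (e i) := by
  simp [blockPerm, Equiv.Perm.sign_mul, Equiv.Perm.sign_prodCongrRight,
    Equiv.Perm.sign_prodCongrLeft]

theorem blockPerm_injective [Nonempty κ] :
    Function.Injective fun p : Equiv.Perm ι × (ι → Equiv.Perm κ) => blockPerm p.1 p.2 := by
  rintro ⟨t, e⟩ ⟨u, f⟩ h
  have hval (a : κ) (i : ι) : e i a = f i a ∧ t i = u i := by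
    simpa [blockPerm_apply] using DFunLike.congr_fun h (a, i)
  exact Prod.ext (Equiv.ext fun i => (hval (Classical.arbitrary κ) i).2)
    (funext fun i => Equiv.ext fun a => (hval a i).1)

theorem exists_blockPerm_eq [Finite κ] [Nonempty κ] [Finite ι] (s : Equiv.Perm (κ × ι))
    (hs : ∀ i a b, (s (a, i)).2 = (s (b, i)).2) : ∃ t e, blockPerm t e = s := by
  have hinside (i : ι) : Function.Bijective fun a => (s (a, i)).1 :=
    Finite.injective_iff_bijective.1 fun a b hab =>
      congrArg Prod.fst (s.injective (Prod.ext hab (hs i a b)))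
  let a₀ : κ := Classical.arbitrary κ
  have hblocks : Function.Bijective fun i => (s (a₀, i)).2 := by
    refine Finite.injective_iff_bijective.1 fun i j hij => ?_
    obtain ⟨a, ha⟩ := (hinside i).2 (s (a₀, j)).1
    exact congrArg Prod.snd (s.injective (Prod.ext ha ((hs i a a₀).trans hij)))
  exact ⟨.ofBijective _ hblocks, fun i => .ofBijective _ (hinside i),
    Equiv.ext fun ⟨a, i⟩ => Prod.ext rfl (hs i a₀ a)⟩

theorem sum_eq_sum_blockPerm [Fintype κ] [DecidableEq κ] [Nonempty κ] [Fintype ι] [DecidableEq ι]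
    {M : Type*} [AddCommMonoid M] (f : Equiv.Perm (κ × ι) → M)
    (hf : ∀ s i a b, (s (a, i)).2 ≠ (s (b, i)).2 → f s = 0) :
    ∑ s, f s = ∑ t : Equiv.Perm ι, ∑ e : ι → Equiv.Perm κ, f (blockPerm t e) := by
  rw [← Fintype.sum_prod_type', ← Fintype.sum_of_injective _ blockPerm_injective _ f ?_
    fun _ => rfl]
  intro s hs
  by_contra! hne
  obtain ⟨t, e, rfl⟩ := exists_blockPerm_eq s fun i a b => by_contra fun h => hne (hf s i a b h)
  exact hs ⟨(t, e), rfl⟩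

end BlockPerm

section ProdOfFn

variable {R : Type*} [Semiring R] {k : ℕ}

theorem prod_ofFn_sum {β : Type*} [Fintype β] (f : Fin k → β → R) :
    (List.ofFn fun i => ∑ b, f i b).prod =
      ∑ v : Fin k → β, (List.ofFn fun i => f i (v i)).prod := by
  simpa only [MultilinearMap.mkPiAlgebraFin_apply] using
    (MultilinearMap.mkPiAlgebraFin ℕ k R).map_sum f

theorem prod_ofFn_smul {S : Type*} [CommSemiring S] [Algebra S R] (c : Fin k → S)
    (y : Fin k → R) :
    (List.ofFn fun i => c i • y i).prod = (∏ i, c i) • (List.ofFn y).prod := by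
  simpa only [MultilinearMap.mkPiAlgebraFin_apply] using
    (MultilinearMap.mkPiAlgebraFin S k R).map_smul_univ c y

end ProdOfFn

section Alternation

variable {κ α : Type*} [Fintype κ] [DecidableEq κ] {M : Type*} [AddCommGroup M]

/-- The signed sum of the values of `F` over all rearrangements of the tuple `v`: the
antisymmetrized monomial `[v₁ … v_p]` when `F` is the ordered product. -/
def alternation (F : (κ → α) → M) (v : κ → α) : M :=
  ∑ s : Equiv.Perm κ, (Equiv.Perm.sign s : ℤ) • F (v ∘ s)

theorem alternation_fin_two (F : (Fin 2 → α) → M) (v : Fin 2 → α) :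
    alternation F v = F ![v 0, v 1] - F ![v 1, v 0] := by
  have huniv : (Finset.univ : Finset (Equiv.Perm (Fin 2))) = {1, Equiv.swap 0 1} := by decide
  have hid : v ∘ (1 : Equiv.Perm (Fin 2)) = ![v 0, v 1] := by ext i; fin_cases i <;> rfl
  have hswap : v ∘ Equiv.swap 0 1 = ![v 1, v 0] := by ext i; fin_cases i <;> simp
  rw [alternation, huniv, Finset.sum_pair (by decide), hid, hswap]
  simp [sub_eq_add_neg]

end Alternation

section BlockAlternation

variable {κ α R : Type*} [Fintype κ] [DecidableEq κ] [Ring R] {k : ℕ}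

/-- The alternation, over all positions in `k` ordered blocks of shape `κ`, of the ordered product
of the values of `F` on the blocks. When `F` multiplies out its block this is the antisymmetrized
monomial of the whole tuple; when `κ = Fin 2` and `F` reads off an entry of a skew-symmetric matrix
it is `2 ^ k * k !` times the Pfaffian. -/
def blockAlternation (F : (κ → α) → R) (x : κ × Fin k → α) : R :=
  alternation (fun w => (List.ofFn fun i => F fun a => w (a, i)).prod) x

theorem map_blockAlternation {S : Type*} [Ring S] (f : R →+* S) (F : (κ → α) → R)
    (x : κ × Fin k → α) :
    f (blockAlternation F x) = blockAlternation (fun v => f (F v)) x := by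
  simp [blockAlternation, alternation, map_list_prod, List.map_ofFn, Function.comp_def]

theorem prod_ofFn_alternation (F : (κ → α) → R) (w : κ × Fin k → α) :
    (List.ofFn fun i => alternation F fun a => w (a, i)).prod =
      ∑ e : Fin k → Equiv.Perm κ, (∏ i, (Equiv.Perm.sign (e i) : ℤ)) •
        (List.ofFn fun i => F fun a => w (e i a, i)).prod := by
  simp only [alternation, prod_ofFn_sum, prod_ofFn_smul, Function.comp_def]

theorem blockAlternation_alternation (F : (κ → α) → R) (x : κ × Fin k → α) :
    blockAlternation (alternation F) x = ((Fintype.card κ)! ^ k) • blockAlternation F x := by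
  have hshift (e : Fin k → Equiv.Perm κ) :
      ∑ s : Equiv.Perm (κ × Fin k), (Equiv.Perm.sign s : ℤ) •
        (∏ i, (Equiv.Perm.sign (e i) : ℤ)) •
          (List.ofFn fun i => F fun a => x (s (e i a, i))).prod = blockAlternation F x := by
    -- Rearrangements inside the blocks are absorbed into `s`.
    refine Fintype.sum_equiv (Equiv.mulRight (blockPerm 1 e)) _ _ fun s => ?_
    simp [Equiv.Perm.sign_mul, sign_blockPerm, blockPerm_apply, mul_smul]
  rw [blockAlternation, alternation]
  simp_rw [prod_ofFn_alternation, Finset.smul_sum]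
  rw [Finset.sum_comm]
  simp only [Function.comp_apply, hshift, Finset.sum_const, Finset.card_univ, Fintype.card_pi,
    Fintype.card_perm, Finset.prod_const, Fintype.card_fin]

theorem blockAlternation_eq_factorial_mul_prod_alternation {A : Type*} [CommRing A] [Nonempty κ]
    (hκ : Even (Fintype.card κ)) (F : (κ → α) → A) (x : κ × Fin k → α)
    (hF : ∀ v : κ → κ × Fin k, ∀ a b, (v a).2 ≠ (v b).2 → F (x ∘ v) = 0) :
    blockAlternation F x = k ! * ∏ i, alternation F fun a => x (a, i) := by
  have hblock (t : Equiv.Perm (Fin k)) (e : Fin k → Equiv.Perm κ) :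
      (Equiv.Perm.sign (blockPerm t e) : ℤ) • ∏ i, F (fun a => x (blockPerm t e (a, i))) =
        ∏ i, (Equiv.Perm.sign (e i) : ℤ) • F fun a => x (e i a, t i) := by
    have hsign : Equiv.Perm.sign t ^ Fintype.card κ = 1 := by
      obtain ⟨m, hm⟩ := hκ
      rw [hm, pow_add, ← mul_pow, Int.units_mul_self, one_pow]
    simp [sign_blockPerm, hsign, blockPerm_apply, Finset.prod_mul_distrib]
  have hperm (t : Equiv.Perm (Fin k)) :
      ∑ e : Fin k → Equiv.Perm κ,
        ∏ i, (Equiv.Perm.sign (e i) : ℤ) • F (fun a => x (e i a, t i)) =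
          ∏ i, alternation F fun a => x (a, i) := by
    rw [← Equiv.prod_comp t]
    simp only [alternation, Function.comp_def, Finset.prod_univ_sum, Fintype.piFinset_univ]
  rw [blockAlternation, alternation]
  simp_rw [List.prod_ofFn, Function.comp_apply]
  rw [sum_eq_sum_blockPerm _ fun s i a b h => ?_]
  · simp_rw [hblock, hperm]
    simp only [Finset.sum_const, Finset.card_univ, Fintype.card_perm, Fintype.card_fin,
      nsmul_eq_mul]
  · rw [Finset.prod_eq_zero (Finset.mem_univ i) (hF (fun a => s (a, i)) a b h), smul_zero]

/-- Splits `Fin (m * k)` into `k` consecutive runs of length `m`, with `(a, i)` the `a`-th element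
of the `i`-th run; `finProdFinEquiv` on `Fin m × Fin k` would have `m` runs of length `k`. -/
def finRunEquiv (m k : ℕ) : Fin m × Fin k ≃ Fin (m * k) :=
  (Equiv.prodComm _ _).trans (finProdFinEquiv.trans (finCongr (mul_comm k m)))

theorem finRunEquiv_val (m k : ℕ) (p : Fin m × Fin k) :
    (finRunEquiv m k p : ℕ) = p.1 + m * p.2 := rfl

theorem alternation_prod_ofFn_eq_blockAlternation (m : ℕ) (y : Fin (m * k) → R) :
    alternation (fun v => (List.ofFn v).prod) y =
      blockAlternation (fun v => (List.ofFn v).prod) (y ∘ finRunEquiv m k) := by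
  refine (Fintype.sum_equiv (finRunEquiv m k).permCongr _ _ fun s => ?_).symm
  have hrun (i : Fin k) (a : Fin m) (h : m * (i : ℕ) + a < m * k) :
      (⟨m * i + a, h⟩ : Fin (m * k)) = finRunEquiv m k (a, i) :=
    Fin.ext (add_comm _ _)
  simp only [Equiv.Perm.sign_permCongr, List.ofFn_mul', List.prod_flatten, List.map_ofFn,
    Function.comp_def, hrun, Equiv.permCongr_apply, Equiv.symm_apply_apply]

theorem blockAlternation_blockDiagonal {A : Type*} [CommRing A]
    (M : Fin k → Matrix (Fin 2) (Fin 2) A) :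
    blockAlternation (fun v => Matrix.blockDiagonal M (v 0) (v 1)) id =
      k ! * ∏ i, (M i 0 1 - M i 1 0) := by
  rw [blockAlternation_eq_factorial_mul_prod_alternation (by decide)]
  · simp [alternation_fin_two, Matrix.blockDiagonal_apply_eq]
  · intro v a b hab
    have h01 : (v 0).2 ≠ (v 1).2 := by
      fin_cases a <;> fin_cases b <;> simp_all [eq_comm]
    exact Matrix.blockDiagonal_apply_ne M _ _ h01

theorem blockAlternation_mul_of_lie_eq_blockDiagonal [IsAddTorsionFree R] {A : Type*} [CommRing A]
    [Algebra A R] (x : Fin 2 × Fin k → R) (r : Fin k → A)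
    (hx : ∀ p q, ⁅x p, x q⁆ =
      algebraMap A R (Matrix.blockDiagonal (fun i => !![0, r i; -r i, 0]) p q)) :
    blockAlternation (fun v => v 0 * v 1) x = algebraMap A R (k ! * ∏ i, r i) := by
  let M : Fin k → Matrix (Fin 2) (Fin 2) A := fun i => !![0, r i; -r i, 0]
  have hcomm : (alternation fun v : Fin 2 → Fin 2 × Fin k => x (v 0) * x (v 1)) =
      fun v => algebraMap A R (Matrix.blockDiagonal M (v 0) (v 1)) := by
    ext v
    simp [alternation_fin_two, M, ← hx, Ring.lie_def]
  refine nsmul_right_injective (pow_ne_zero k two_ne_zero) ?_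
  calc 2 ^ k • blockAlternation (fun v => v 0 * v 1) x
      = blockAlternation (alternation fun v : Fin 2 → Fin 2 × Fin k => x (v 0) * x (v 1)) id := by
        rw [blockAlternation_alternation]; rfl
    _ = algebraMap A R (k ! * ∏ i, (M i 0 1 - M i 1 0)) := by
        rw [hcomm, ← map_blockAlternation, blockAlternation_blockDiagonal]
    _ = 2 ^ k • algebraMap A R (k ! * ∏ i, r i) := by
        have hM (i : Fin k) : M i 0 1 - M i 1 0 = 2 * r i := by simp [M, two_mul]
        rw [← map_nsmul, nsmul_eq_mul]
        simp only [hM, Finset.prod_mul_distrib, Finset.prod_const, Finset.card_univ,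
          Fintype.card_fin, Nat.cast_pow, Nat.cast_ofNat, mul_left_comm]

end BlockAlternation

section Weyl

variable {n : ℕ}

theorem lie_σw (a b : Fin (2 * n)) :
    ⁅σw n a, σw n b⁆ = algebraMap ℚ (W n) (-(1 / 2) * gmat n a b) := by
  have h := RingQuot.mkAlgHom_rel ℚ (WeylRel.rel (n := n) a b)
  rw [map_sub, map_mul, map_mul, AlgHom.commutes] at h
  rw [Ring.lie_def, σw, σw, h, sub_sub_cancel_left, ← map_neg]
  ring_nf

theorem pairTupleW_finRunEquiv_val (T : Finset (Fin n)) (a : Fin 2) (i : Fin T.card) :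
    (pairTupleW n T (finRunEquiv 2 T.card (a, i)) : ℕ) = T.orderEmbOfFin rfl i + n * a := by
  have hdiv (h) : (⟨(finRunEquiv 2 T.card (a, i) : ℕ) / 2, h⟩ : Fin T.card) = i :=
    Fin.ext (by simp only [finRunEquiv_val]; omega)
  have hmod : (finRunEquiv 2 T.card (a, i) : ℕ) % 2 = a := by simp only [finRunEquiv_val]; omega
  simp only [pairTupleW, hdiv, hmod]
  fin_cases a <;> simp

theorem gmat_pairTupleW (T : Finset (Fin n)) (p q : Fin 2 × Fin T.card) :
    gmat n (pairTupleW n T (finRunEquiv 2 T.card p)) (pairTupleW n T (finRunEquiv 2 T.card q)) =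
      Matrix.blockDiagonal (fun _ => !![0, -1; 1, 0]) p q := by
  obtain ⟨a, i⟩ := p
  obtain ⟨b, j⟩ := q
  let β := T.orderEmbOfFin rfl
  have hlt (i : Fin T.card) : (β i : ℕ) < n := (β i).isLt
  have hne (i j : Fin T.card) : (β i : ℕ) ≠ β j + n := by have := hlt i; omega
  have heq (i j : Fin T.card) : (β i : ℕ) = β j ↔ i = j := by
    rw [Fin.val_inj, β.injective.eq_iff]
  simp only [gmat, pairTupleW_finRunEquiv_val, Matrix.blockDiagonal_apply]
  fin_cases a <;> fin_cases b <;> simp [β, hlt, hne, heq, eq_comm (a := j)]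

theorem brktW_pairTupleW (T : Finset (Fin n)) :
    brktW n (2 * T.card) (pairTupleW n T) = algebraMap ℚ (W n) (T.card ! * (1 / 2) ^ T.card) := by
  have : IsAddTorsionFree (W n) := .of_module_rat _
  let x : Fin 2 × Fin T.card → W n := fun p => σw n (pairTupleW n T (finRunEquiv 2 T.card p))
  have hx (p q : Fin 2 × Fin T.card) : ⁅x p, x q⁆ =
      algebraMap ℚ (W n) (Matrix.blockDiagonal (fun _ => !![0, 1 / 2; -(1 / 2), 0]) p q) := by
    have hscale : (fun _ => !![0, 1 / 2; -(1 / 2), 0]) =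
        (-(1 / 2) : ℚ) • fun _ : Fin T.card => !![0, -1; 1, 0] := by
      ext i a b
      fin_cases a <;> fin_cases b <;> simp
    rw [lie_σw, gmat_pairTupleW, hscale, Matrix.blockDiagonal_smul, Matrix.smul_apply,
      smul_eq_mul]
  calc brktW n (2 * T.card) (pairTupleW n T)
      = alternation (fun v => (List.ofFn v).prod) fun j => σw n (pairTupleW n T j) := rfl
    _ = blockAlternation (fun v => v 0 * v 1) x := by
        rw [alternation_prod_ofFn_eq_blockAlternation]
        simp [x, Function.comp_def]
    _ = algebraMap ℚ (W n) (T.card ! * (1 / 2) ^ T.card) := by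
        rw [blockAlternation_mul_of_lie_eq_blockDiagonal x (fun _ => 1 / 2) hx]
        simp

end Weyl

/-- In the bosonic oscillator realization `W_n`, for `0 ≤ k ≤ n` the element
`A^{(n)}_{2k}` equals the scalar `2^{−k} n!/(n−k)!`. -/
theorem stmt14 (n : ℕ) (hn : 1 ≤ n) (k : ℕ) (hk : k ≤ n) :
    AcalW n k = (((1:ℚ)/2^k) * (((n)! : ℚ) / ((n-k))!)) • (1 : W n) := by
  have hterm : ∀ T ∈ Finset.powersetCard k (Finset.univ : Finset (Fin n)),
      brktW n (2 * T.card) (pairTupleW n T) = algebraMap ℚ (W n) (k ! * (1 / 2) ^ k) := by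
    intro T hT
    rw [brktW_pairTupleW, (Finset.mem_powersetCard.1 hT).2]
  have hscalar : (n.choose k : ℚ) * (k ! * (1 / 2) ^ k) = 1 / 2 ^ k * (n ! / (n - k)!) := by
    rw [Nat.cast_choose ℚ hk, div_pow, one_pow]
    field_simp
  rw [AcalW, Finset.sum_congr rfl hterm, Finset.sum_const, Finset.card_powersetCard,
    Finset.card_univ, Fintype.card_fin, ← Algebra.algebraMap_eq_smul_one, ← map_nsmul,
    nsmul_eq_mul, hscalar]

end
end
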